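/- Let 𝓑 be an admissible W-orbit of sets of mutually orthogonal positive roots, B ∈ 𝓑, and let i, j be nodes with i ∼ j. If r_j r_i r_j·B < r_j r_i·B < r_i·B < B, then also r_j r_i r_j·B < r_i r_j·B < r_j·B < B. -/

import Mathlib

/-!
The idea is to read every step of the descending chain off the original set `B`.

If `α i ∉ B`, then `r i` maps `B` injectively to `r i · B`, the roots that move are exactly those
with `⟪β, α i⟫ = ±1`, and their heights change by `∓1`.  Hence `r i · B < B` says that some
`β ∈ B` with `⟪β, α i⟫ = 1` is at most as high as every `γ ∈ B` with `⟪γ, α i⟫ = -1`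
(`lt_rAct_dest`, `lt_rAct_intro`); if `α i ∈ B` then `r i · B = B`.

Put `x β = ⟪β, α i⟫` and `y β = ⟪β, α j⟫`.  By the braid relation the hypotheses form the chain
for `r i r j r i`, whose three steps involve `x`, `x + y`, `y` in this order, while the desired
chain for `r j r i r j` involves `y`, `x + y`, `x`.  In each case the root witnessing a step of the
first chain also witnesses the step of the second chain with the same linear form.  To compare
the heights, the following exclusions are used, which hold because no root has height
`0`: if `β ⟂ γ` are roots and `δ` is a root with `⟪β, δ⟫ = 1`, `⟪γ, δ⟫ = -1`, then `β - γ - δ`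
is a root, so `ht β ≠ ht γ + ht δ`; this is applied to `δ = α i`, `α j` and `α i + α j`.  If
`(x, y)` is `(1, -1)` at `β` and `(-1, 1)` at `γ`, then `β - γ - α i + α j` is a root too, so
`ht β ≠ ht γ`.
-/

open scoped InnerProductSpace

/-- A finite crystallographic simply laced root system `Φ` in a real inner
product space, normalized so that `⟪β, β⟫ = 2` for all roots, together with a
fixed base `α 1, …, α n` (the nodes of the diagram `M`), the corresponding set
`Pos` of positive roots, and the height linear functional `ht`. -/
structure SLRS (V : Type) [NormedAddCommGroup V] [InnerProductSpace ℝ V] where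
  /-- the number of nodes of the diagram -/
  n : ℕ
  /-- the set of roots -/
  Φ : Set V
  /-- the set of positive roots -/
  Pos : Set V
  /-- the simple roots -/
  α : Fin n → V
  /-- the height functional: heights are sums of coefficients on simple roots -/
  ht : V →ₗ[ℝ] ℝ
  finite : Φ.Finite
  pos_subset : Pos ⊆ Φ
  mem_pos_or_neg : ∀ β ∈ Φ, β ∈ Pos ∨ -β ∈ Pos
  not_pos_and_neg : ∀ β ∈ Pos, -β ∉ Pos
  alpha_pos : ∀ i, α i ∈ Pos
  norm_two : ∀ β ∈ Φ, ⟪β, β⟫_ℝ = 2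
  inner_int : ∀ β ∈ Φ, ∀ γ ∈ Φ, ∃ z : ℤ, ⟪β, γ⟫_ℝ = (z : ℝ)
  reflect_mem : ∀ β ∈ Φ, ∀ γ ∈ Φ, β - ⟪β, γ⟫_ℝ • γ ∈ Φ
  reduced : ∀ β ∈ Φ, ∀ t : ℝ, t • β ∈ Φ → t = 1 ∨ t = -1
  pos_coeff : ∀ β ∈ Pos, ∃ a : Fin n → ℕ, β = ∑ i, (a i : ℝ) • α i
  ht_alpha : ∀ i, ht (α i) = 1

namespace SLRS

variable {V : Type} [NormedAddCommGroup V] [InnerProductSpace ℝ V] (S : SLRS V)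

/-- Adjacency of two nodes of the diagram: `i ∼ j` iff `⟪α i, α j⟫ = -1`. -/
def adj (i j : Fin S.n) : Prop := ⟪S.α i, S.α j⟫_ℝ = -1

/-- The reflection along a root `δ` (normalized so that `⟪δ, δ⟫ = 2`). -/
def reflRoot (δ : V) : V → V := fun v => v - ⟪v, δ⟫_ℝ • δ

/-- The fundamental reflection `r i`. -/
def refl (i : Fin S.n) : V → V := reflRoot (S.α i)

/-- A set of mutually orthogonal positive roots. -/
def IsOrthoSet (B : Set V) : Prop :=
  B ⊆ S.Pos ∧ ∀ β ∈ B, ∀ γ ∈ B, β ≠ γ → ⟪β, γ⟫_ℝ = 0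

/-- The action of a map `w` on a set `B` of positive roots:
`w·B = Φ⁺ ∩ {± w β : β ∈ B}`. -/
def mapSet (w : V → V) (B : Set V) : Set V :=
  {x ∈ S.Pos | ∃ β ∈ B, w β = x ∨ w β = -x}

/-- The action of the fundamental reflection `r i` on a set of positive roots. -/
def rAct (i : Fin S.n) (B : Set V) : Set V := S.mapSet (S.refl i) B

/-- The action of the reflection along a root `δ` on a set of positive roots. -/
def reflAct (δ : V) (B : Set V) : Set V := S.mapSet (reflRoot δ) B

/-- The `W`-orbit of `B`, `W` being generated by the fundamental reflections. -/
def orbitOf (B : Set V) : Set (Set V) :=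
  {C | Relation.ReflTransGen (fun X Y => ∃ i, Y = S.rAct i X) B C}

/-- `𝓑` is a `W`-orbit of sets of mutually orthogonal positive roots. -/
def IsOrbit (𝓑 : Set (Set V)) : Prop :=
  ∃ B, S.IsOrthoSet B ∧ 𝓑 = S.orbitOf B

/-- Admissibility of a `W`-orbit of sets of mutually orthogonal positive roots. -/
def Admissible (𝓑 : Set (Set V)) : Prop :=
  S.IsOrbit 𝓑 ∧ ∀ B ∈ 𝓑, ∀ i j : Fin S.n, i ≠ j → ¬ S.adj i j →
    (∃ γ, γ ∈ B ∧ γ - S.α i + S.α j ∈ B) → S.rAct i B = S.rAct j B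

/-- The height order: `B < C` iff `B ≠ C` and the minimal height of an element
of `B \ C` is smaller than the minimal height of an element of `C \ B`. -/
def lt (B C : Set V) : Prop :=
  B ≠ C ∧ sInf (⇑S.ht '' (B \ C)) < sInf (⇑S.ht '' (C \ B))

/-- The map `V → V` determined by the word `l = [i₁, …, iₛ]`,
namely `r i₁ ∘ r i₂ ∘ ⋯ ∘ r iₛ`. -/
def wordMap (l : List (Fin S.n)) : V → V := l.foldr (fun i f => S.refl i ∘ f) id

/-- A map belongs to the Weyl group `W` iff it is realized by a word in the
fundamental reflections. -/
def InW (w : V → V) : Prop := ∃ l : List (Fin S.n), S.wordMap l = w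

/-- The Coxeter length of an element of `W`: the minimal length of a word in
the fundamental reflections representing it. -/
noncomputable def len (w : V → V) : ℕ :=
  sInf {k | ∃ l : List (Fin S.n), l.length = k ∧ S.wordMap l = w}

/-- The action of `w ∈ W` on a set of positive roots. -/
def wAct (w : V → V) (B : Set V) : Set V := S.mapSet w B

/-- `r i₁ · (r i₂ · ⋯ (r iₛ · B))` for the word `l = [i₁, …, iₛ]`. -/
def suffixAct (l : List (Fin S.n)) (B : Set V) : Set V := l.foldr S.rAct B

/-- The chain `B > r iₛ · B > r iₛ₋₁ r iₛ · B > ⋯ > r i₁ ⋯ r iₛ · B` obtained by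
successively applying the letters of the word `l = [i₁, …, iₛ]` to `B` is
strictly descending at every step. -/
def DescChain (l : List (Fin S.n)) (B : Set V) : Prop :=
  ∀ k < l.length, S.lt (S.suffixAct (l.drop k) B) (S.suffixAct (l.drop (k + 1)) B)

end SLRS

namespace SLRS

section

variable {V : Type} [NormedAddCommGroup V] [InnerProductSpace ℝ V] (S : SLRS V)

/-! ### Roots and heights -/

lemma neg_mem {β : V} (hβ : β ∈ S.Φ) : -β ∈ S.Φ := by
  have h := S.reflect_mem β hβ β hβ
  rw [S.norm_two β hβ] at h
  have e : β - (2 : ℝ) • β = -β := by module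
  rwa [e] at h

lemma sub_mem {β γ : V} (hβ : β ∈ S.Φ) (hγ : γ ∈ S.Φ) (h : ⟪β, γ⟫_ℝ = 1) : β - γ ∈ S.Φ := by
  have := S.reflect_mem β hβ γ hγ
  rwa [h, one_smul] at this

lemma add_mem {β γ : V} (hβ : β ∈ S.Φ) (hγ : γ ∈ S.Φ) (h : ⟪β, γ⟫_ℝ = -1) : β + γ ∈ S.Φ := by
  have := S.reflect_mem β hβ γ hγ
  rwa [h, neg_one_smul, sub_neg_eq_add] at this

lemma ne_zero_of_mem {β : V} (hβ : β ∈ S.Φ) : β ≠ 0 := by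
  rintro rfl
  simpa using S.norm_two 0 hβ

lemma ht_pos {β : V} (hβ : β ∈ S.Pos) : ∃ m : ℕ, 1 ≤ m ∧ S.ht β = m := by
  obtain ⟨a, ha⟩ := S.pos_coeff β hβ
  refine ⟨∑ k, a k, ?_, ?_⟩
  · by_contra h
    have h0 : ∑ k, a k = 0 := by omega
    rw [Finset.sum_eq_zero_iff] at h0
    refine S.ne_zero_of_mem (S.pos_subset hβ) ?_
    rw [ha]
    exact Finset.sum_eq_zero fun k hk => by rw [h0 k hk]; simp
  · rw [ha]
    simp [S.ht_alpha]

lemma ht_ne_zero {β : V} (hβ : β ∈ S.Φ) : S.ht β ≠ 0 := by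
  rcases S.mem_pos_or_neg β hβ with h | h
  · obtain ⟨m, hm, e⟩ := S.ht_pos h
    rw [e]
    have : (1 : ℝ) ≤ m := by exact_mod_cast hm
    linarith
  · obtain ⟨m, hm, e⟩ := S.ht_pos h
    rw [map_neg] at e
    have : (1 : ℝ) ≤ m := by exact_mod_cast hm
    linarith

lemma inner_cases {β γ : V} (hβ : β ∈ S.Pos) (hγ : γ ∈ S.Pos) (hne : β ≠ γ) :
    ⟪β, γ⟫_ℝ = -1 ∨ ⟪β, γ⟫_ℝ = 0 ∨ ⟪β, γ⟫_ℝ = 1 := by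
  have hb := S.norm_two β (S.pos_subset hβ)
  have hc := S.norm_two γ (S.pos_subset hγ)
  obtain ⟨z, hz⟩ := S.inner_int β (S.pos_subset hβ) γ (S.pos_subset hγ)
  have h1 : 0 < ⟪β - γ, β - γ⟫_ℝ := by
    rw [real_inner_self_eq_norm_sq]
    have : 0 < ‖β - γ‖ := norm_pos_iff.2 (sub_ne_zero.2 hne)
    positivity
  have h2 : 0 < ⟪β + γ, β + γ⟫_ℝ := by
    rw [real_inner_self_eq_norm_sq]
    have : 0 < ‖β + γ‖ := by
      refine norm_pos_iff.2 fun h => S.not_pos_and_neg β hβ ?_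
      rwa [neg_eq_of_add_eq_zero_right h]
    positivity
  simp only [inner_sub_left, inner_sub_right, inner_add_left, inner_add_right,
    real_inner_comm β γ, hb, hc, hz] at h1 h2
  have h3 : z < 2 := by
    have : (z : ℝ) < 2 := by linarith
    exact_mod_cast this
  have h4 : -2 < z := by
    have : (-2 : ℝ) < z := by linarith
    exact_mod_cast this
  rw [hz]
  have : z = -1 ∨ z = 0 ∨ z = 1 := by omega
  rcases this with rfl | rfl | rfl <;> simp

/-- The vector `β - γ - δ` is a root, and no root has height zero. -/
lemma ht_ne_add {β γ δ : V} (hβ : β ∈ S.Φ) (hγ : γ ∈ S.Φ) (hδ : δ ∈ S.Φ)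
    (h0 : ⟪β, γ⟫_ℝ = 0) (h1 : ⟪β, δ⟫_ℝ = 1) (h2 : ⟪γ, δ⟫_ℝ = -1) :
    S.ht β ≠ S.ht γ + S.ht δ := by
  intro h
  have hm := S.sub_mem hβ (S.add_mem hγ hδ h2) (by rw [inner_add_right, h0, h1, zero_add])
  apply S.ht_ne_zero hm
  rw [map_sub, map_add, h, sub_self]

/-- The vector `β - γ - δ + ε` is a root whose height is `ht β - ht γ`. -/
lemma ht_ne_of_opposite {β γ δ ε : V} (hβ : β ∈ S.Φ) (hγ : γ ∈ S.Φ) (hδ : δ ∈ S.Φ) (hε : ε ∈ S.Φ)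
    (h0 : ⟪β, γ⟫_ℝ = 0) (hδε : ⟪δ, ε⟫_ℝ = -1) (hd : S.ht δ = S.ht ε)
    (h1 : ⟪β, δ⟫_ℝ = 1) (h2 : ⟪γ, δ⟫_ℝ = -1) (h3 : ⟪β, ε⟫_ℝ = -1) (h4 : ⟪γ, ε⟫_ℝ = 1) :
    S.ht β ≠ S.ht γ := by
  intro h
  have hm := S.sub_mem hβ (S.add_mem hγ hδ h2) (by rw [inner_add_right, h0, h1, zero_add])
  have hm' := S.add_mem hm hε (by
    rw [inner_sub_left, inner_add_left, h3, h4, hδε]; norm_num)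
  apply S.ht_ne_zero hm'
  rw [map_add, map_sub, map_add, h, hd]
  ring

/-! ### The action of the fundamental reflections -/

lemma refl_apply (i : Fin S.n) (v : V) : S.refl i v = v - ⟪v, S.α i⟫_ℝ • S.α i := rfl

lemma alpha_mem (i : Fin S.n) : S.α i ∈ S.Φ := S.pos_subset (S.alpha_pos i)

lemma refl_mem (i : Fin S.n) {v : V} (hv : v ∈ S.Φ) : S.refl i v ∈ S.Φ :=
  S.reflect_mem v hv _ (S.alpha_mem i)

lemma refl_neg (i : Fin S.n) (v : V) : S.refl i (-v) = -S.refl i v := by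
  simp only [refl_apply, inner_neg_left]
  module

lemma refl_refl (i : Fin S.n) (v : V) : S.refl i (S.refl i v) = v := by
  simp only [refl_apply, inner_sub_left, real_inner_smul_left, S.norm_two _ (S.alpha_mem i)]
  module

lemma inner_refl_refl (i : Fin S.n) (v w : V) : ⟪S.refl i v, S.refl i w⟫_ℝ = ⟪v, w⟫_ℝ := by
  simp only [refl_apply, inner_sub_left, inner_sub_right, real_inner_smul_left,
    real_inner_smul_right, S.norm_two _ (S.alpha_mem i), real_inner_comm w (S.α i)]
  ring

lemma ht_refl (i : Fin S.n) (v : V) : S.ht (S.refl i v) = S.ht v - ⟪v, S.α i⟫_ℝ := by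
  simp [refl_apply, S.ht_alpha]

lemma inner_refl_self (i : Fin S.n) (v : V) : ⟪S.refl i v, S.α i⟫_ℝ = -⟪v, S.α i⟫_ℝ := by
  simp only [refl_apply, inner_sub_left, real_inner_smul_left, S.norm_two _ (S.alpha_mem i)]
  ring

lemma inner_refl_adj {i j : Fin S.n} (h : S.adj i j) (v : V) :
    ⟪S.refl i v, S.α j⟫_ℝ = ⟪v, S.α i⟫_ℝ + ⟪v, S.α j⟫_ℝ := by
  unfold adj at h
  simp only [refl_apply, inner_sub_left, real_inner_smul_left, h]
  ring

lemma adj_symm {i j : Fin S.n} (h : S.adj i j) : S.adj j i := by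
  unfold adj at *
  rwa [real_inner_comm]

lemma refl_braid {i j : Fin S.n} (h : S.adj i j) (v : V) :
    S.refl j (S.refl i (S.refl j v)) = S.refl i (S.refl j (S.refl i v)) := by
  rw [S.refl_apply j (S.refl i (S.refl j v)), S.refl_apply i (S.refl j (S.refl i v)),
    S.inner_refl_adj h, S.inner_refl_adj (S.adj_symm h), S.inner_refl_self, S.inner_refl_adj (S.adj_symm h),
    S.inner_refl_self, S.inner_refl_adj h, S.refl_apply i (S.refl j v),
    S.refl_apply j (S.refl i v), S.inner_refl_adj h, S.inner_refl_adj (S.adj_symm h),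
    S.refl_apply i, S.refl_apply j]
  module

/-- If `r i β` were negative, then `ht β + ht (-r i β) = ⟪β, α i⟫ ≤ 1`, whereas both heights are
at least `1`. -/
lemma refl_pos (i : Fin S.n) {β : V} (hβ : β ∈ S.Pos) (hne : β ≠ S.α i) : S.refl i β ∈ S.Pos := by
  rcases S.mem_pos_or_neg _ (S.refl_mem i (S.pos_subset hβ)) with h | h
  · exact h
  · exfalso
    obtain ⟨m, hm, e⟩ := S.ht_pos h
    obtain ⟨m', hm', e'⟩ := S.ht_pos hβ
    rw [map_neg, ht_refl, e'] at e
    have a1 : (1 : ℝ) ≤ m := by exact_mod_cast hm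
    have a2 : (1 : ℝ) ≤ m' := by exact_mod_cast hm'
    rcases S.inner_cases hβ (S.alpha_pos i) hne with h | h | h <;> rw [h] at e <;> linarith

lemma rAct_isOrtho (i : Fin S.n) {B : Set V} (hB : S.IsOrthoSet B) : S.IsOrthoSet (S.rAct i B) := by
  refine ⟨fun x hx => hx.1, ?_⟩
  rintro x ⟨hx, β, hβ, hb⟩ y ⟨hy, γ, hγ, hc⟩ hxy
  have key : β ≠ γ := by
    rintro rfl
    rcases hb with rfl | hb <;> rcases hc with hc | hc
    · exact hxy hc
    · exact S.not_pos_and_neg y hy (hc ▸ hx)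
    · exact S.not_pos_and_neg x hx (by rw [← hb, hc]; exact hy)
    · exact hxy (neg_injective (hb.symm.trans hc))
  have h := S.inner_refl_refl i β γ
  rw [hB.2 β hβ γ hγ key] at h
  rcases hb with hb | hb <;> rcases hc with hc | hc <;> rw [hb, hc] at h <;> simpa using h

lemma orbit_isOrtho {𝓑 : Set (Set V)} (h : S.IsOrbit 𝓑) {B : Set V} (hB : B ∈ 𝓑) :
    S.IsOrthoSet B := by
  obtain ⟨B₀, h0, rfl⟩ := h
  have hB' : Relation.ReflTransGen (fun X Y => ∃ i, Y = S.rAct i X) B₀ B := hB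
  induction hB' with
  | refl => exact h0
  | tail hab hbc ih =>
    obtain ⟨i, rfl⟩ := hbc
    exact S.rAct_isOrtho i (ih hab)

lemma rAct_mapSet (i : Fin S.n) (w : V → V) {B : Set V} (hw : ∀ β ∈ B, w β ∈ S.Φ) :
    S.rAct i (S.mapSet w B) = S.mapSet (fun v => S.refl i (w v)) B := by
  ext x
  constructor
  · rintro ⟨hx, y, ⟨hy, β, hβ, hb⟩, hc⟩
    refine ⟨hx, β, hβ, ?_⟩
    rcases hb with hb | hb
    · simpa only [hb] using hc
    · simp only [hb, refl_neg]
      rcases hc with hc | hc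
      · right; rw [hc]
      · left; rw [hc, neg_neg]
  · rintro ⟨hx, β, hβ, hb⟩
    refine ⟨hx, ?_⟩
    dsimp only at hb
    rcases S.mem_pos_or_neg _ (hw β hβ) with h | h
    · exact ⟨w β, ⟨h, β, hβ, Or.inl rfl⟩, hb⟩
    · refine ⟨-w β, ⟨h, β, hβ, Or.inr (neg_neg _).symm⟩, ?_⟩
      rw [refl_neg]
      rcases hb with hb | hb
      · right; rw [hb]
      · left; rw [hb, neg_neg]

lemma rAct_braid {i j : Fin S.n} (h : S.adj i j) {B : Set V} (hB : B ⊆ S.Pos) :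
    S.rAct j (S.rAct i (S.rAct j B)) = S.rAct i (S.rAct j (S.rAct i B)) := by
  have m : ∀ β ∈ B, β ∈ S.Φ := fun β hβ => S.pos_subset (hB hβ)
  rw [show S.rAct j B = S.mapSet (S.refl j) B from rfl,
    show S.rAct i B = S.mapSet (S.refl i) B from rfl,
    S.rAct_mapSet i _ fun β hβ => S.refl_mem j (m β hβ),
    S.rAct_mapSet j _ fun β hβ => S.refl_mem i (m β hβ),
    S.rAct_mapSet j _ fun β hβ => S.refl_mem i (S.refl_mem j (m β hβ)),
    S.rAct_mapSet i _ fun β hβ => S.refl_mem j (S.refl_mem i (m β hβ))]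
  congr 1
  funext v
  exact S.refl_braid h v

lemma rAct_eq_image (i : Fin S.n) {B : Set V} (hB : B ⊆ S.Pos) (hi : S.α i ∉ B) :
    S.rAct i B = S.refl i '' B := by
  have p : ∀ β ∈ B, S.refl i β ∈ S.Pos := fun β hβ =>
    S.refl_pos i (hB hβ) (by rintro rfl; exact hi hβ)
  ext x
  constructor
  · rintro ⟨hx, β, hβ, hb | hb⟩
    · exact ⟨β, hβ, hb⟩
    · exact (S.not_pos_and_neg x hx (hb ▸ p β hβ)).elim
  · rintro ⟨β, hβ, rfl⟩
    exact ⟨p β hβ, β, hβ, Or.inl rfl⟩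

lemma rAct_eq_self (i : Fin S.n) {B : Set V} (hB : S.IsOrthoSet B) (hi : S.α i ∈ B) :
    S.rAct i B = B := by
  have f : ∀ β ∈ B, β ≠ S.α i → S.refl i β = β := fun β hβ h => by
    rw [refl_apply, hB.2 β hβ _ hi h]; simp
  have g : S.refl i (S.α i) = -S.α i := by
    rw [refl_apply, S.norm_two _ (S.alpha_mem i)]; module
  ext x
  constructor
  · rintro ⟨hx, β, hβ, hb⟩
    by_cases h : β = S.α i
    · subst h
      rw [g] at hb
      rcases hb with hb | hb
      · exact (S.not_pos_and_neg _ (S.alpha_pos i) (hb ▸ hx)).elim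
      · rwa [← neg_injective hb]
    · rw [f β hβ h] at hb
      rcases hb with hb | hb
      · rwa [← hb]
      · exact (S.not_pos_and_neg x hx (hb ▸ hB.1 hβ)).elim
  · intro hx
    refine ⟨hB.1 hx, x, hx, ?_⟩
    by_cases h : x = S.α i
    · subst h; exact Or.inr g
    · exact Or.inl (f x hx h)

/-! ### Descending steps -/

lemma refl_not_mem (i : Fin S.n) {B : Set V} (hB : S.IsOrthoSet B) (hi : S.α i ∉ B) {β : V}
    (hβ : β ∈ B) (h : ⟪β, S.α i⟫_ℝ ≠ 0) : S.refl i β ∉ B := by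
  intro hm
  have hne : β ≠ S.refl i β := by
    intro e
    have := S.inner_refl_self i β
    rw [← e] at this
    exact h (by linarith)
  have h1 := hB.2 β hβ _ hm hne
  rw [refl_apply, inner_sub_right, real_inner_smul_right, S.norm_two _ (S.pos_subset (hB.1 hβ))] at h1
  rcases S.inner_cases (hB.1 hβ) (S.alpha_pos i) (by rintro rfl; exact hi hβ) with e | e | e <;>
    rw [e] at h1 <;> norm_num at h1

lemma diff_rAct (i : Fin S.n) {B : Set V} (hB : S.IsOrthoSet B) (hi : S.α i ∉ B) :
    B \ S.rAct i B = {β ∈ B | ⟪β, S.α i⟫_ℝ ≠ 0} := by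
  rw [S.rAct_eq_image i hB.1 hi]
  ext x
  constructor
  · rintro ⟨hx, hx'⟩
    refine ⟨hx, fun h => hx' ⟨x, hx, ?_⟩⟩
    rw [refl_apply, h]; simp
  · rintro ⟨hx, h⟩
    refine ⟨hx, ?_⟩
    rintro ⟨y, hy, rfl⟩
    exact S.refl_not_mem i hB hi hx h (by rwa [refl_refl])

lemma rAct_diff (i : Fin S.n) {B : Set V} (hB : S.IsOrthoSet B) (hi : S.α i ∉ B) :
    S.rAct i B \ B = S.refl i '' {β ∈ B | ⟪β, S.α i⟫_ℝ ≠ 0} := by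
  rw [S.rAct_eq_image i hB.1 hi]
  ext x
  constructor
  · rintro ⟨⟨y, hy, rfl⟩, h⟩
    refine ⟨y, ⟨hy, fun h' => h ?_⟩, rfl⟩
    rw [refl_apply, h']; simpa using hy
  · rintro ⟨y, ⟨hy, h⟩, rfl⟩
    exact ⟨⟨y, hy, rfl⟩, S.refl_not_mem i hB hi hy h⟩

lemma ortho_finite {B : Set V} (hB : S.IsOrthoSet B) : B.Finite :=
  S.finite.subset fun _ h => S.pos_subset (hB.1 h)

lemma lt_rAct_dest (i : Fin S.n) {B : Set V} (hB : S.IsOrthoSet B) (h : S.lt (S.rAct i B) B) :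
    S.α i ∉ B ∧ ∃ β ∈ B, ⟪β, S.α i⟫_ℝ = 1 ∧
      ∀ γ ∈ B, ⟪γ, S.α i⟫_ℝ = -1 → S.ht β ≤ S.ht γ := by
  have hi : S.α i ∉ B := fun hi => h.1 (S.rAct_eq_self i hB hi)
  refine ⟨hi, ?_⟩
  obtain ⟨hne, hlt⟩ := h
  rw [S.diff_rAct i hB hi, S.rAct_diff i hB hi] at hlt
  set D : Set V := {β ∈ B | ⟪β, S.α i⟫_ℝ ≠ 0} with hD
  have hDf : D.Finite := (S.ortho_finite hB).subset fun _ h => h.1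
  have hDn : D.Nonempty := by
    by_contra h0
    rw [Set.not_nonempty_iff_eq_empty] at h0
    rw [h0] at hlt
    simp at hlt
  obtain ⟨_, ⟨β, hβ, rfl⟩, e⟩ :=
    (((hDn.image (S.refl i)).image S.ht).csInf_mem ((hDf.image _).image _))
  rw [← e] at hlt
  have hle : ∀ γ ∈ D, S.ht (S.refl i β) < S.ht γ := fun γ hγ =>
    hlt.trans_le (csInf_le (hDf.image _).bddBelow ⟨γ, hγ, rfl⟩)
  have hb := S.inner_cases (hB.1 hβ.1) (S.alpha_pos i) (by rintro rfl; exact hi hβ.1)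
  have hself := hle β hβ
  have h1 : ⟪β, S.α i⟫_ℝ = 1 := by
    rw [ht_refl] at hself
    rcases hb with hb | hb | hb
    · rw [hb] at hself; linarith
    · exact (hβ.2 hb).elim
    · exact hb
  refine ⟨β, hβ.1, h1, fun γ hγ hc => ?_⟩
  have := hle γ ⟨hγ, by rw [hc]; norm_num⟩
  rw [ht_refl, h1] at this
  obtain ⟨m, -, e1⟩ := S.ht_pos (hB.1 hβ.1)
  obtain ⟨m', -, e2⟩ := S.ht_pos (hB.1 hγ)
  rw [e1, e2] at this ⊢
  have h3 : (m : ℝ) < (m' + 1 : ℕ) := by push_cast; linarith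
  have h4 : m < m' + 1 := by exact_mod_cast h3
  exact_mod_cast Nat.lt_succ_iff.1 h4

lemma lt_rAct_intro (i : Fin S.n) {B : Set V} (hB : S.IsOrthoSet B) (hi : S.α i ∉ B)
    (h : ∃ β ∈ B, ⟪β, S.α i⟫_ℝ = 1 ∧ ∀ γ ∈ B, ⟪γ, S.α i⟫_ℝ = -1 → S.ht β ≤ S.ht γ) :
    S.lt (S.rAct i B) B := by
  obtain ⟨β, hβ, hb, hle⟩ := h
  have hβD : β ∈ {β ∈ B | ⟪β, S.α i⟫_ℝ ≠ 0} := ⟨hβ, by rw [hb]; norm_num⟩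
  refine ⟨fun e => ?_, ?_⟩
  · rw [← S.diff_rAct i hB hi, e, Set.sdiff_self] at hβD
    exact hβD
  rw [S.diff_rAct i hB hi, S.rAct_diff i hB hi]
  set D : Set V := {β ∈ B | ⟪β, S.α i⟫_ℝ ≠ 0} with hD
  have hDf : D.Finite := (S.ortho_finite hB).subset fun _ h => h.1
  -- a root of least height among those lowered by the reflection
  obtain ⟨β₀, ⟨h0, hb0⟩, hmin⟩ := Set.exists_min_image {β ∈ B | ⟪β, S.α i⟫_ℝ = 1} S.ht
    ((S.ortho_finite hB).subset fun _ h => h.1) ⟨β, hβ, hb⟩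
  obtain ⟨γ, hγ, e⟩ := (Set.Nonempty.image S.ht ⟨β, hβD⟩).csInf_mem (hDf.image _)
  rw [← e]
  have h1 : sInf (S.ht '' (S.refl i '' D)) ≤ S.ht (S.refl i β₀) :=
    csInf_le ((hDf.image _).image _).bddBelow
      ⟨_, ⟨β₀, ⟨h0, by rw [hb0]; norm_num⟩, rfl⟩, rfl⟩
  rw [ht_refl, hb0] at h1
  have h2 : S.ht β₀ ≤ S.ht γ := by
    rcases S.inner_cases (hB.1 hγ.1) (S.alpha_pos i) (by rintro rfl; exact hi hγ.1) with hc | hc | hc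
    · exact (hmin β ⟨hβ, hb⟩).trans (hle γ hγ.1 hc)
    · exact (hγ.2 hc).elim
    · exact hmin γ ⟨hγ.1, hc⟩
  linarith

/-! ### Comparison of two roots -/

/-- Integer coordinates `(m, x, y)` = (height, inner products with `α i` and `α j`) of one element
of an orthogonal set that contains none of `α i`, `α j`, `α i + α j`; the last of these conditions
is stated as `α j ∉ r i · B`. -/
lemma coord {i j : Fin S.n} (hij : S.adj i j) {B : Set V} (hB : S.IsOrthoSet B)
    (hi : S.α i ∉ B) (hj : S.α j ∉ B) (hk : S.α j ∉ S.rAct i B) {β : V} (hβ : β ∈ B) :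
    ∃ m x y : ℤ, S.ht β = m ∧ ⟪β, S.α i⟫_ℝ = x ∧ ⟪β, S.α j⟫_ℝ = y ∧
      -1 ≤ x ∧ x ≤ 1 ∧ -1 ≤ y ∧ y ≤ 1 ∧ -1 ≤ x + y ∧ x + y ≤ 1 := by
  have key : ∀ r : ℝ, (r = -1 ∨ r = 0 ∨ r = 1) → ∃ z : ℤ, r = z ∧ -1 ≤ z ∧ z ≤ 1 := by
    rintro r (rfl | rfl | rfl)
    · exact ⟨-1, by simp⟩
    · exact ⟨0, by simp⟩
    · exact ⟨1, by simp⟩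
  have hr : S.refl i β ∈ S.rAct i B := by
    rw [S.rAct_eq_image i hB.1 hi]; exact ⟨β, hβ, rfl⟩
  obtain ⟨m, -, hm⟩ := S.ht_pos (hB.1 hβ)
  obtain ⟨x, hx, x1, x2⟩ := key _
    (S.inner_cases (hB.1 hβ) (S.alpha_pos i) (by rintro rfl; exact hi hβ))
  obtain ⟨y, hy, y1, y2⟩ := key _
    (S.inner_cases (hB.1 hβ) (S.alpha_pos j) (by rintro rfl; exact hj hβ))
  obtain ⟨z, hz, z1, z2⟩ := key _
    (S.inner_cases hr.1 (S.alpha_pos j) (by intro e; exact hk (e ▸ hr)))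
  rw [S.inner_refl_adj hij, hx, hy] at hz
  have hz' : x + y = z := by exact_mod_cast hz
  exact ⟨m, x, y, by simpa using hm, hx, hy, x1, x2, y1, y2, by omega, by omega⟩

/-- The height exclusions for two elements `β`, `γ` of the orthogonal set, in the integer
coordinates of `coord`. -/
lemma exclusions {i j : Fin S.n} (hij : S.adj i j) {B : Set V} (hB : S.IsOrthoSet B)
    {β γ : V} (hβ : β ∈ B) (hγ : γ ∈ B) {m x y m' x' y' : ℤ}
    (hm : S.ht β = m) (hx : ⟪β, S.α i⟫_ℝ = x) (hy : ⟪β, S.α j⟫_ℝ = y)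
    (hm' : S.ht γ = m') (hx' : ⟪γ, S.α i⟫_ℝ = x') (hy' : ⟪γ, S.α j⟫_ℝ = y') :
    (x = 1 → x' = -1 → m ≠ m' + 1) ∧ (y = 1 → y' = -1 → m ≠ m' + 1) ∧
    (x + y = 1 → x' + y' = -1 → m ≠ m' + 2) ∧
    (x = 1 → x' = -1 → y = -1 → y' = 1 → m ≠ m') := by
  have bm := S.pos_subset (hB.1 hβ)
  have cm := S.pos_subset (hB.1 hγ)
  have orth : ∀ δ : V, ⟪β, δ⟫_ℝ ≠ ⟪γ, δ⟫_ℝ → ⟪β, γ⟫_ℝ = 0 := fun δ h =>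
    hB.2 β hβ γ hγ (by rintro rfl; exact h rfl)
  refine ⟨?_, ?_, ?_, ?_⟩
  · rintro rfl rfl e
    refine S.ht_ne_add bm cm (S.alpha_mem i) (orth (S.α i) ?_) (by simpa using hx)
      (by simpa using hx') ?_
    · rw [hx, hx']; norm_num
    · rw [hm, hm', S.ht_alpha, e]; push_cast; ring
  · rintro rfl rfl e
    refine S.ht_ne_add bm cm (S.alpha_mem j) (orth (S.α j) ?_) (by simpa using hy)
      (by simpa using hy') ?_
    · rw [hy, hy']; norm_num
    · rw [hm, hm', S.ht_alpha, e]; push_cast; ring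
  · intro h h' e
    have h1 : ⟪β, S.α i + S.α j⟫_ℝ = 1 := by
      rw [inner_add_right, hx, hy]; exact_mod_cast h
    have h2 : ⟪γ, S.α i + S.α j⟫_ℝ = -1 := by
      rw [inner_add_right, hx', hy']; exact_mod_cast h'
    refine S.ht_ne_add bm cm (S.add_mem (S.alpha_mem i) (S.alpha_mem j) hij)
      (orth (S.α i + S.α j) ?_) h1 h2 ?_
    · rw [h1, h2]; norm_num
    · rw [hm, hm', map_add, S.ht_alpha, S.ht_alpha, e]; push_cast; ring
  · rintro rfl rfl rfl rfl e
    refine S.ht_ne_of_opposite bm cm (S.alpha_mem i) (S.alpha_mem j) (orth (S.α i) ?_) hij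
      (by rw [S.ht_alpha, S.ht_alpha]) (by simpa using hx) (by simpa using hx')
      (by simpa using hy) (by simpa using hy') ?_
    · rw [hx, hx']; norm_num
    · rw [hm, hm', e]

end

end SLRS

open SLRS

variable {V : Type} [NormedAddCommGroup V] [InnerProductSpace ℝ V]

/-- Lemma 3.4(iv): for `𝓑` admissible, `B ∈ 𝓑`, nodes
`i ∼ j`: if `r j r i r j · B < r j r i · B < r i · B < B`, then also
`r j r i r j · B < r i r j · B < r j · B < B`. -/
theorem chain_adjacent_down (S : SLRS V) (𝓑 : Set (Set V))
    (hadm : S.Admissible 𝓑) (B : Set V) (hB : B ∈ 𝓑) (i j : Fin S.n)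
    (hij : S.adj i j)
    (h1 : S.lt (S.rAct j (S.rAct i (S.rAct j B))) (S.rAct j (S.rAct i B)))
    (h2 : S.lt (S.rAct j (S.rAct i B)) (S.rAct i B))
    (h3 : S.lt (S.rAct i B) B) :
    S.lt (S.rAct j (S.rAct i (S.rAct j B))) (S.rAct i (S.rAct j B)) ∧
    S.lt (S.rAct i (S.rAct j B)) (S.rAct j B) ∧
    S.lt (S.rAct j B) B := by
  have hO := S.orbit_isOrtho hadm.1 hB
  have hji := S.adj_symm hij
  rw [S.rAct_braid hij hO.1] at h1 ⊢
  have hO1 := S.rAct_isOrtho i hO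
  obtain ⟨hi, β₁, hβ₁, p1, q1⟩ := S.lt_rAct_dest i hO h3
  obtain ⟨hj1, H2⟩ := S.lt_rAct_dest j hO1 h2
  obtain ⟨hi2, H3⟩ := S.lt_rAct_dest i (S.rAct_isOrtho j hO1) h1
  have E1 := S.rAct_eq_image i hO.1 hi
  have E2 := S.rAct_eq_image j hO1.1 hj1
  -- `r j r i (α j) = α i`
  have hj : S.α j ∉ B := by
    intro h
    apply hi2
    rw [E2, E1]
    refine ⟨_, ⟨_, h, rfl⟩, ?_⟩
    unfold adj at hij hji
    simp only [S.refl_apply, inner_sub_left, real_inner_smul_left, hij, hji,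
      S.norm_two _ (S.alpha_mem j)]
    module
  have F1 := S.rAct_eq_image j hO.1 hj
  have hP1 := S.rAct_isOrtho j hO
  -- `r j β = α i` means `β = α i + α j`, so `r i β = α j`
  have hi1 : S.α i ∉ S.rAct j B := by
    rw [F1]
    rintro ⟨β, hβ, e⟩
    apply hj1
    rw [E1]
    refine ⟨β, hβ, ?_⟩
    rw [← S.refl_refl j β, e]
    unfold adj at hij hji
    simp only [S.refl_apply, inner_sub_left, real_inner_smul_left, hij,
      hji, S.norm_two _ (S.alpha_mem i)]
    module
  have F2 := S.rAct_eq_image i hP1.1 hi1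
  -- `r i r j β = α j` means `β = α i`
  have hj2 : S.α j ∉ S.rAct i (S.rAct j B) := by
    rw [F2, F1]
    rintro ⟨_, ⟨β, hβ, rfl⟩, e⟩
    apply hi
    convert hβ
    rw [← S.refl_refl j β, ← S.refl_refl i (S.refl j β), e]
    unfold adj at hij hji
    simp only [S.refl_apply, inner_sub_left, real_inner_smul_left, hij, hji,
      S.norm_two _ (S.alpha_mem j)]
    module
  rw [E1] at H2
  rw [E2, E1] at H3
  simp only [Set.exists_mem_image, Set.forall_mem_image, S.inner_refl_adj hij,
    S.inner_refl_adj hji, S.inner_refl_self, S.ht_refl] at H2 H3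
  obtain ⟨β₂, hβ₂, p2, q2⟩ := H2
  obtain ⟨β₃, hβ₃, p3, q3⟩ := H3
  refine ⟨?_, ?_, ?_⟩
  · rw [← S.rAct_braid hij hO.1]
    refine S.lt_rAct_intro j (S.rAct_isOrtho i hP1) hj2 ?_
    rw [F2, F1]
    simp only [Set.exists_mem_image, Set.forall_mem_image, S.inner_refl_adj hij,
      S.inner_refl_adj hji, S.inner_refl_self, S.ht_refl]
    obtain ⟨m, x, y, hm, hx, hy, hd⟩ := S.coord hij hO hi hj hj1 hβ₁
    refine ⟨β₁, hβ₁, by linarith, fun γ hγ hc => ?_⟩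
    obtain ⟨m', x', y', hm', hx', hy', hd'⟩ := S.coord hij hO hi hj hj1 hγ
    have hex := S.exclusions hij hO hβ₁ hγ hm hx hy hm' hx' hy'
    have hex' := S.exclusions hij hO hγ hβ₁ hm' hx' hy' hm hx hy
    replace q1 := q1 γ hγ
    rw [hx', hm, hm'] at q1
    rw [hx] at p1
    rw [hx', hy'] at hc
    rw [hm, hm', hx, hx', hy, hy']
    norm_cast at *
    omega
  · refine S.lt_rAct_intro i hP1 hi1 ?_
    rw [F1]
    simp only [Set.exists_mem_image, Set.forall_mem_image, S.inner_refl_adj hji, S.ht_refl]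
    obtain ⟨m, x, y, hm, hx, hy, hd⟩ := S.coord hij hO hi hj hj1 hβ₂
    refine ⟨β₂, hβ₂, by linarith, fun γ hγ hc => ?_⟩
    obtain ⟨m', x', y', hm', hx', hy', hd'⟩ := S.coord hij hO hi hj hj1 hγ
    have hex := S.exclusions hij hO hβ₂ hγ hm hx hy hm' hx' hy'
    replace q2 := q2 hγ
    rw [hx', hy', hm, hm', hx] at q2
    rw [hx, hy] at p2
    rw [hx', hy'] at hc
    rw [hm, hm', hy, hy']
    norm_cast at *
    omega
  · refine S.lt_rAct_intro j hO hj ?_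
    obtain ⟨m, x, y, hm, hx, hy, hd⟩ := S.coord hij hO hi hj hj1 hβ₃
    refine ⟨β₃, hβ₃, by linarith, fun γ hγ hc => ?_⟩
    obtain ⟨m', x', y', hm', hx', hy', hd'⟩ := S.coord hij hO hi hj hj1 hγ
    have hex := S.exclusions hij hO hβ₃ hγ hm hx hy hm' hx' hy'
    replace q3 := q3 hγ
    rw [hx', hy', hm, hm', hx, hy] at q3
    rw [hx, hy] at p3
    rw [hy'] at hc
    rw [hm, hm']
    norm_cast at *
    omega
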